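/- arXiv:2303.10631 — 2 statements merged into one kernel-verified Lean document; each statement's English description precedes it below -/
import Mathlib

section
/- Let R be a commutative ring. The following are equivalent: (i) for every alphabet Σ, every trim bideterministic weighted automaton over R and Σ is minimal; (ii) R is trivial (0 = 1) or R is an integral domain. -/
/-- A weighted automaton over a semiring `S` and alphabet `α`:
a finite type of states `Q`, a transition weighting `σ`, an initial
weighting `ι` and a terminal weighting `τ`. -/
structure WeightedAutomaton (S : Type) [Semiring S] (α : Type) : Type 1 where
  Q : Type
  [fintypeQ : Fintype Q]
  σ : Q → α → Q → S
  ι : Q → S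
  τ : Q → S

namespace WeightedAutomaton

attribute [instance] fintypeQ

variable {S : Type} [Semiring S] {α : Type}

/-- The "future" of a state on a word: the sum, over all runs from this state
upon the word, of the product of the transition weights times the terminal
weight of the last state.  (Sequences of states using a zero-weight transition
contribute zero, so this is exactly the sum over runs.) -/
def future (A : WeightedAutomaton S α) : List α → A.Q → S
  | [], q => A.τ q
  | c :: w, q => ∑ p : A.Q, A.σ q c p * A.future w p

/-- The behaviour of a weighted automaton: the series sending each word `w`
to the sum of the monomial weights `ι(q₀)·σ(q₀,c₁,q₁)⋯σ(q_{n−1},cₙ,qₙ)·τ(qₙ)`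
of all runs of the automaton upon `w`. -/
def behaviour (A : WeightedAutomaton S α) (w : List α) : S :=
  ∑ q : A.Q, A.ι q * A.future w q

/-- A weighted automaton is bideterministic if at most one state has nonzero
initial weight, at most one state has nonzero terminal weight, and for every
letter each state has at most one outgoing and at most one incoming transition
with nonzero weight upon that letter. -/
def Bideterministic (A : WeightedAutomaton S α) : Prop :=
  (∀ p q, A.ι p ≠ 0 → A.ι q ≠ 0 → p = q) ∧
  (∀ p q, A.τ p ≠ 0 → A.τ q ≠ 0 → p = q) ∧
  (∀ p c q q', A.σ p c q ≠ 0 → A.σ p c q' ≠ 0 → q = q') ∧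
  (∀ p p' c q, A.σ p c q ≠ 0 → A.σ p' c q ≠ 0 → p = p')

/-- `A.IsPath q l` : starting in state `q`, the list `l` of (letter, next state)
pairs follows transitions all of which have nonzero weight, i.e. it is a run. -/
def IsPath (A : WeightedAutomaton S α) : A.Q → List (α × A.Q) → Prop
  | _, [] => True
  | q, (c, q') :: l => A.σ q c q' ≠ 0 ∧ A.IsPath q' l

/-- The last state of a path. -/
def pathEnd (A : WeightedAutomaton S α) : A.Q → List (α × A.Q) → A.Q
  | q, [] => q
  | _, (_, q') :: l => A.pathEnd q' l

/-- The product of the transition weights along a path. -/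
def pathWeight (A : WeightedAutomaton S α) : A.Q → List (α × A.Q) → S
  | _, [] => 1
  | q, (c, q') :: l => A.σ q c q' * A.pathWeight q' l

/-- A state is accessible if some run from a state with nonzero initial weight
ends in it. -/
def Accessible (A : WeightedAutomaton S α) (q : A.Q) : Prop :=
  ∃ p l, A.ι p ≠ 0 ∧ A.IsPath p l ∧ A.pathEnd p l = q

/-- A state is coaccessible if some run from it ends in a state with nonzero
terminal weight. -/
def Coaccessible (A : WeightedAutomaton S α) (q : A.Q) : Prop :=
  ∃ l, A.IsPath q l ∧ A.τ (A.pathEnd q l) ≠ 0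

/-- A weighted automaton is trim if all its states are accessible and
coaccessible. -/
def Trim (A : WeightedAutomaton S α) : Prop :=
  ∀ q, A.Accessible q ∧ A.Coaccessible q

/-- A weighted automaton is semantically trim if every state lies on some run
whose monomial weight is nonzero. -/
def SemanticallyTrim (A : WeightedAutomaton S α) : Prop :=
  ∀ q, ∃ p l, A.IsPath p l ∧ (q = p ∨ q ∈ l.map Prod.snd) ∧
    A.ι p * A.pathWeight p l * A.τ (A.pathEnd p l) ≠ 0

/-- The number of states of a weighted automaton. -/
def states (A : WeightedAutomaton S α) : ℕ := Fintype.card A.Q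

/-- A weighted automaton is minimal if every weighted automaton over the same
semiring and alphabet with the same behaviour has at least as many states. -/
def Minimal (A : WeightedAutomaton S α) : Prop :=
  ∀ B : WeightedAutomaton S α, B.behaviour = A.behaviour → A.states ≤ B.states

end WeightedAutomaton

/-!
In a bideterministic automaton, reading a run from the initial state to `q` turns the initial
vector into a multiple of the `q`-th unit vector, and reading a run from `q` to the terminal state
backwards turns the terminal vector into a multiple of the `q`-th unit vector. In a trim automaton
such runs exist for every `q`, and without zero divisors the multiples are nonzero: the Hankel
matrix, with entry `‖A‖ (uv)` at `(u, v)`, contains a diagonal block, indexed by the states, with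
nonzero diagonal entries.
An automaton with `m` states factors every block of its Hankel matrix through `S ^ m`, so the
strong rank condition bounds the size of the diagonal block by `m`.

Conversely, if `a * b = 0` with `a, b ≠ 0`, a single state of initial weight `a` and terminal
weight `b` is trim and bideterministic, but has the same behaviour as the automaton without states.
-/

open Matrix

theorem card_le_card_of_mul_eq_diagonal {S m n : Type*} [Semiring S] [IsRightCancelMulZero S]
    [StrongRankCondition S] [Fintype m] [Fintype n] [DecidableEq n] {X : Matrix n m S}
    {Y : Matrix m n S} {d : n → S} (hd : ∀ i, d i ≠ 0) (hXY : X * Y = diagonal d) :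
    Fintype.card n ≤ Fintype.card m := by
  refine card_le_of_injective S X.vecMulLinear fun x y hxy => funext fun i => ?_
  have hdiag : x ᵥ* diagonal d = y ᵥ* diagonal d := by
    rw [← hXY, ← vecMul_vecMul, ← vecMul_vecMul]
    exact congrArg (· ᵥ* Y) hxy
  exact mul_right_cancel₀ (hd i) (by simpa only [vecMul_diagonal] using congrFun hdiag i)

theorem eq_pi_single_of_ne_zero_imp_eq {ι M : Type*} [DecidableEq ι] [Zero M] {f : ι → M} {i : ι}
    (hf : ∀ j, f j ≠ 0 → j = i) : f = Pi.single i (f i) := by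
  funext j
  by_cases hj : j = i
  · rw [hj, Pi.single_eq_same]
  · rw [Pi.single_eq_of_ne hj, not_ne_iff.1 (mt (hf j) hj)]

namespace WeightedAutomaton

variable {S : Type} [Semiring S] {α : Type}

section Hankel

/-- The matrix of transition weights upon the letter `c`. -/
def letterMatrix (A : WeightedAutomaton S α) (c : α) : Matrix A.Q A.Q S :=
  Matrix.of fun p q => A.σ p c q

/-- The row vector obtained from the row vector `x` of state weights by reading a word from left
to right. For `x = A.ι` it is the dual of `A.future`: its entry at `q` sums the weights of the runs
upon the word that end in `q`. -/
def propagate (A : WeightedAutomaton S α) : (A.Q → S) → List α → A.Q → S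
  | x, [] => x
  | x, c :: w => A.propagate (x ᵥ* A.letterMatrix c) w

theorem future_cons (A : WeightedAutomaton S α) (c : α) (w : List α) :
    A.future (c :: w) = A.letterMatrix c *ᵥ A.future w :=
  rfl

theorem dotProduct_future_append (A : WeightedAutomaton S α) (x : A.Q → S) (u v : List α) :
    x ⬝ᵥ A.future (u ++ v) = A.propagate x u ⬝ᵥ A.future v := by
  induction u generalizing x with
  | nil => rfl
  | cons c u ih => rw [List.cons_append, future_cons, dotProduct_mulVec, ih, propagate]

theorem behaviour_append (A : WeightedAutomaton S α) (u v : List α) :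
    A.behaviour (u ++ v) = A.propagate A.ι u ⬝ᵥ A.future v :=
  A.dotProduct_future_append A.ι u v

theorem card_le_states_of_behaviour_append_eq_diagonal [IsRightCancelMulZero S]
    [StrongRankCondition S] {n : Type*} [Fintype n] [DecidableEq n] (A : WeightedAutomaton S α)
    {u v : n → List α} {d : n → S} (hd : ∀ i, d i ≠ 0)
    (huv : ∀ i j, A.behaviour (u i ++ v j) = diagonal d i j) : Fintype.card n ≤ A.states := by
  let pasts : Matrix n A.Q S := Matrix.of fun i => A.propagate A.ι (u i)
  let futures : Matrix A.Q n S := Matrix.of fun q j => A.future (v j) q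
  have hankel_factorization : pasts * futures = diagonal d := by
    ext i j
    rw [← huv, behaviour_append]
    rfl
  exact card_le_card_of_mul_eq_diagonal hd hankel_factorization

end Hankel

section Runs

variable {A : WeightedAutomaton S α}

theorem pathWeight_ne_zero [Nontrivial S] [NoZeroDivisors S] {p : A.Q} {l : List (α × A.Q)}
    (hl : A.IsPath p l) : A.pathWeight p l ≠ 0 := by
  induction l generalizing p with
  | nil => exact one_ne_zero
  | cons a l ih => exact mul_ne_zero hl.1 (ih hl.2)

variable [DecidableEq A.Q]

theorem Bideterministic.single_vecMul_letterMatrix (hA : A.Bideterministic) {p r : A.Q} {c : α}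
    (hpr : A.σ p c r ≠ 0) (x : S) :
    Pi.single p x ᵥ* A.letterMatrix c = Pi.single r (x * A.σ p c r) := by
  have hrow : A.letterMatrix c p = Pi.single r (A.σ p c r) :=
    eq_pi_single_of_ne_zero_imp_eq fun q hq => hA.2.2.1 p c q r hq hpr
  funext q
  rw [vecMul, single_dotProduct, hrow]
  exact Pi.apply_single (fun _ => (x * ·)) (fun _ => mul_zero x) r _ q

theorem Bideterministic.letterMatrix_mulVec_single (hA : A.Bideterministic) {p r : A.Q} {c : α}
    (hpr : A.σ p c r ≠ 0) (x : S) :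
    A.letterMatrix c *ᵥ Pi.single r x = Pi.single p (A.σ p c r * x) := by
  have hcol : (fun q => A.letterMatrix c q r) = Pi.single p (A.σ p c r) :=
    eq_pi_single_of_ne_zero_imp_eq fun q hq => hA.2.2.2 q p c r hq hpr
  funext q
  rw [mulVec, dotProduct_single, congrFun hcol q]
  exact Pi.apply_single (fun _ => (· * x)) (fun _ => zero_mul x) p _ q

theorem Bideterministic.propagate_single (hA : A.Bideterministic) {p : A.Q}
    {l : List (α × A.Q)} (hl : A.IsPath p l) (x : S) :
    A.propagate (Pi.single p x) (l.map Prod.fst) =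
      Pi.single (A.pathEnd p l) (x * A.pathWeight p l) := by
  induction l generalizing p x with
  | nil => simp only [List.map_nil, propagate, pathEnd, pathWeight, mul_one]
  | cons a l ih =>
    rw [List.map_cons, propagate, hA.single_vecMul_letterMatrix hl.1, ih hl.2, mul_assoc]
    rfl

theorem Bideterministic.future_eq_single (hA : A.Bideterministic) {p : A.Q}
    {l : List (α × A.Q)} (hl : A.IsPath p l) (hτ : A.τ (A.pathEnd p l) ≠ 0) :
    A.future (l.map Prod.fst) = Pi.single p (A.pathWeight p l * A.τ (A.pathEnd p l)) := by
  induction l generalizing p with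
  | nil =>
    rw [pathWeight, one_mul]
    exact eq_pi_single_of_ne_zero_imp_eq fun q hq => hA.2.1 q p hq hτ
  | cons a l ih =>
    rw [List.map_cons, future_cons, ih hl.2 hτ, hA.letterMatrix_mulVec_single hl.1, ← mul_assoc]
    rfl

variable [NoZeroDivisors S]

theorem Accessible.exists_propagate_eq_single {q : A.Q} (hq : A.Accessible q)
    (hA : A.Bideterministic) : ∃ u, ∃ x ≠ 0, A.propagate A.ι u = Pi.single q x := by
  obtain ⟨p, l, hp, hl, rfl⟩ := hq
  have : Nontrivial S := nontrivial_of_ne _ _ hp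
  have hι : A.ι = Pi.single p (A.ι p) :=
    eq_pi_single_of_ne_zero_imp_eq fun q hq => hA.1 q p hq hp
  refine ⟨l.map Prod.fst, A.ι p * A.pathWeight p l, mul_ne_zero hp (pathWeight_ne_zero hl), ?_⟩
  rw [hι, hA.propagate_single hl, Pi.single_eq_same]

theorem Coaccessible.exists_future_eq_single {q : A.Q} (hq : A.Coaccessible q)
    (hA : A.Bideterministic) : ∃ v, ∃ y ≠ 0, A.future v = Pi.single q y := by
  obtain ⟨l, hl, hτ⟩ := hq
  have : Nontrivial S := nontrivial_of_ne _ _ hτ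
  exact ⟨l.map Prod.fst, _, mul_ne_zero (pathWeight_ne_zero hl) hτ, hA.future_eq_single hl hτ⟩

theorem Trim.exists_behaviour_append_eq_diagonal (hT : A.Trim) (hA : A.Bideterministic) :
    ∃ (u v : A.Q → List α) (d : A.Q → S), (∀ q, d q ≠ 0) ∧
      ∀ p q, A.behaviour (u p ++ v q) = diagonal d p q := by
  choose u x hx hu using fun q => (hT q).1.exists_propagate_eq_single hA
  choose v y hy hv using fun q => (hT q).2.exists_future_eq_single hA
  refine ⟨u, v, fun q => x q * y q, fun q => mul_ne_zero (hx q) (hy q), fun p q => ?_⟩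
  rw [behaviour_append, hu, hv, single_dotProduct]
  obtain rfl | hpq := eq_or_ne p q
  · rw [Pi.single_eq_same, diagonal_apply_eq]
  · rw [Pi.single_eq_of_ne hpq, mul_zero, diagonal_apply_ne _ hpq]

end Runs

section Minimality

variable {A : WeightedAutomaton S α}

theorem Trim.minimal_of_bideterministic [IsRightCancelMulZero S] [StrongRankCondition S]
    (hT : A.Trim) (hA : A.Bideterministic) : A.Minimal := by
  classical
  intro B hB
  obtain ⟨u, v, d, hd, huv⟩ := hT.exists_behaviour_append_eq_diagonal hA
  exact B.card_le_states_of_behaviour_append_eq_diagonal hd fun p q => hB ▸ huv p q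

theorem Trim.isEmpty_of_subsingleton [Subsingleton S] (hT : A.Trim) : IsEmpty A.Q := by
  refine ⟨fun q => ?_⟩
  obtain ⟨p, _, hp, _⟩ := (hT q).1
  exact hp (Subsingleton.elim _ _)

theorem minimal_of_isEmpty [IsEmpty A.Q] : A.Minimal := fun B _ =>
  Fintype.card_eq_zero.trans_le (Nat.zero_le B.states)

theorem Minimal.isEmpty_of_behaviour_eq_zero (hA : A.Minimal) (h0 : A.behaviour = 0) :
    IsEmpty A.Q := by
  let stateless : WeightedAutomaton S α :=
    { Q := Empty, σ := fun _ _ _ => 0, ι := fun _ => 0, τ := fun _ => 0 }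
  have hle : A.states ≤ stateless.states :=
    hA stateless (h0 ▸ funext fun _ => Fintype.sum_empty (ι := Empty) _)
  exact Fintype.card_eq_zero_iff.1 (Nat.le_zero.1 hle)

end Minimality

section SingleState

variable {a b : S}

/-- The automaton without transitions on a single state of initial weight `a` and terminal weight
`b`. For nonzero `a` and `b` with `a * b = 0` it is trim and bideterministic, but not minimal. -/
def singleState (α : Type) (a b : S) : WeightedAutomaton S α where
  Q := Unit
  σ _ _ _ := 0
  ι _ := a
  τ _ := b

theorem singleState_trim (ha : a ≠ 0) (hb : b ≠ 0) : (singleState α a b).Trim := fun q =>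
  ⟨⟨q, [], ha, trivial, rfl⟩, ⟨[], trivial, hb⟩⟩

theorem singleState_bideterministic : (singleState α a b).Bideterministic :=
  ⟨fun _ _ _ _ => rfl, fun _ _ _ _ => rfl, fun _ _ _ _ _ _ => rfl, fun _ _ _ _ _ _ => rfl⟩

theorem singleState_behaviour_eq_zero (hab : a * b = 0) : (singleState α a b).behaviour = 0 := by
  funext w
  refine Finset.sum_eq_zero fun q _ => ?_
  cases w with
  | nil => exact hab
  | cons c w => simp only [future, singleState, zero_mul, Finset.sum_const_zero, mul_zero]

theorem noZeroDivisors_of_forall_minimal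
    (h : ∀ A : WeightedAutomaton S α, A.Trim → A.Bideterministic → A.Minimal) :
    NoZeroDivisors S := by
  refine ⟨fun {a b} hab => ?_⟩
  by_contra! hne
  have hmin := h _ (singleState_trim hne.1 hne.2) singleState_bideterministic
  exact (hmin.isEmpty_of_behaviour_eq_zero (singleState_behaviour_eq_zero hab)).false ()

end SingleState

end WeightedAutomaton

theorem trim_bideterministic_minimal_iff_trivial_or_isDomain_general
    {R : Type} [Ring R] (hR : Nontrivial R → StrongRankCondition R) (α : Type) :
    (∀ A : WeightedAutomaton R α, A.Trim → A.Bideterministic → A.Minimal) ↔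
      ((0 : R) = 1 ∨ IsDomain R) := by
  constructor
  · intro hmin
    have := WeightedAutomaton.noZeroDivisors_of_forall_minimal hmin
    refine or_iff_not_imp_left.2 fun h01 => ?_
    have : Nontrivial R := nontrivial_of_ne 0 1 h01
    exact NoZeroDivisors.to_isDomain R
  · rintro (h01 | hdom) A hT hA
    · have := subsingleton_of_zero_eq_one h01
      have := hT.isEmpty_of_subsingleton
      exact WeightedAutomaton.minimal_of_isEmpty
    · have := hR inferInstance
      exact hT.minimal_of_bideterministic hA

/-- For a commutative ring `R`, every trim bideterministic weighted automaton
over `R` is minimal if and only if `R` is trivial or an integral domain. -/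
theorem trim_bideterministic_minimal_iff_trivial_or_isDomain
    {R : Type} [CommRing R] :
    (∀ (α : Type) (_ : Fintype α) (_ : Nonempty α)
        (A : WeightedAutomaton R α), A.Trim → A.Bideterministic → A.Minimal) ↔
      ((0 : R) = 1 ∨ IsDomain R) := by
  have hR (α : Type) := trim_bideterministic_minimal_iff_trivial_or_isDomain_general
    (R := R) (fun _ => inferInstance) α
  exact ⟨fun h => (hR Unit).1 (h Unit inferInstance inferInstance), fun h α _ _ => (hR α).2 h⟩
end

section
/- Let S be a commutative semiring containing elements s, t, s', t' ∈ S such that s·t ≠ 0, s'·t' ≠ 0, s·t' = 0, and s'·t = 0. Then there is a trim bideterministic weighted automaton A over S and a two-letter alphabet {a, b} such that no minimal weighted automaton over S whose behaviour equals ‖A‖ is bideterministic. -/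
/-! The series takes the value `s * t` at `aa`, the value `s' * t'` at `bab`, and is zero elsewhere.
A general automaton may let the runs upon `aa` and `bab` share the state before their last letter:
the words `ab` and `baa` thereby gain runs, but their weights are the cross terms `s * t' = 0` and
`s' * t = 0`, so four states suffice. A bideterministic automaton needs five. Over a commutative
semiring, cutting a loop out of a run only removes a factor from its weight, so in a deterministic
automaton the run upon a word whose proper subwords all have value zero never repeats a state. This
applies to `aa` and `bab`, and bideterminism keeps the inner state of the first run apart from those
of the second.
-/

namespace WeightedAutomaton

section Semiring

variable {S : Type} [Semiring S] {α : Type} {A : WeightedAutomaton S α}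

theorem isPath_append (p : A.Q) (l m : List (α × A.Q)) :
    A.IsPath p (l ++ m) ↔ A.IsPath p l ∧ A.IsPath (A.pathEnd p l) m := by
  induction l generalizing p with
  | nil => simp [IsPath, pathEnd]
  | cons e l ih => simp [IsPath, pathEnd, ih, and_assoc]

theorem pathEnd_append (p : A.Q) (l m : List (α × A.Q)) :
    A.pathEnd p (l ++ m) = A.pathEnd (A.pathEnd p l) m := by
  induction l generalizing p with
  | nil => rfl
  | cons e _ ih => exact ih e.2

theorem pathWeight_append (p : A.Q) (l m : List (α × A.Q)) :
    A.pathWeight p (l ++ m) = A.pathWeight p l * A.pathWeight (A.pathEnd p l) m := by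
  induction l generalizing p with
  | nil => simp [pathWeight, pathEnd]
  | cons e l ih => simp [pathWeight, pathEnd, ih, mul_assoc]

theorem isPath_of_pathWeight_ne_zero {p : A.Q} {l : List (α × A.Q)} (h : A.pathWeight p l ≠ 0) :
    A.IsPath p l := by
  induction l generalizing p with
  | nil => trivial
  | cons e l ih => exact ⟨left_ne_zero_of_mul h, ih (right_ne_zero_of_mul h)⟩

theorem getElem_cons_map_snd_eq_pathEnd_take (p : A.Q) (l : List (α × A.Q)) (i : ℕ)
    (hi : i < (p :: l.map Prod.snd).length) :
    (p :: l.map Prod.snd)[i] = A.pathEnd p (l.take i) := by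
  induction l generalizing p i with
  | nil =>
    obtain rfl : i = 0 := by simpa using hi
    rfl
  | cons e l ih =>
    cases i with
    | zero => rfl
    | succ i => exact ih e.2 i (by simpa using hi)

theorem accessible_of_ι_ne_zero {q : A.Q} (h : A.ι q ≠ 0) : A.Accessible q :=
  ⟨q, [], h, trivial, rfl⟩

theorem Accessible.step {p q : A.Q} {c : α} (hp : A.Accessible p) (h : A.σ p c q ≠ 0) :
    A.Accessible q := by
  obtain ⟨r, l, hr, hl, rfl⟩ := hp
  exact ⟨r, l ++ [(c, q)], hr, (isPath_append _ _ _).2 ⟨hl, h, trivial⟩, pathEnd_append r l _⟩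

theorem coaccessible_of_τ_ne_zero {q : A.Q} (h : A.τ q ≠ 0) : A.Coaccessible q :=
  ⟨[], trivial, h⟩

theorem Coaccessible.step {p q : A.Q} {c : α} (hq : A.Coaccessible q) (h : A.σ p c q ≠ 0) :
    A.Coaccessible p := by
  obtain ⟨l, hl, hτ⟩ := hq
  exact ⟨(c, q) :: l, ⟨h, hl⟩, hτ⟩

/-- The monomial weight `ι(q₀)·σ(q₀,c₁,q₁)⋯σ(q_{n−1},cₙ,qₙ)·τ(qₙ)` of the run that starts in
`p = q₀` and follows the pairs `(c₁, q₁), …, (cₙ, qₙ)` of `l`. -/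
def monomialWeight (A : WeightedAutomaton S α) (p : A.Q) (l : List (α × A.Q)) : S :=
  A.ι p * A.pathWeight p l * A.τ (A.pathEnd p l)

theorem ι_ne_zero_of_monomialWeight_ne_zero {p : A.Q} {l : List (α × A.Q)}
    (h : A.monomialWeight p l ≠ 0) : A.ι p ≠ 0 :=
  left_ne_zero_of_mul (left_ne_zero_of_mul h)

theorem τ_ne_zero_of_monomialWeight_ne_zero {p : A.Q} {l : List (α × A.Q)}
    (h : A.monomialWeight p l ≠ 0) : A.τ (A.pathEnd p l) ≠ 0 :=
  right_ne_zero_of_mul h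

theorem isPath_of_monomialWeight_ne_zero {p : A.Q} {l : List (α × A.Q)}
    (h : A.monomialWeight p l ≠ 0) : A.IsPath p l :=
  isPath_of_pathWeight_ne_zero (right_ne_zero_of_mul (left_ne_zero_of_mul h))

-- The left factor `x` makes the induction go through: it collects the weights already read.
theorem exists_path_of_mul_future_ne_zero {x : S} {w : List α} {q : A.Q}
    (h : x * A.future w q ≠ 0) :
    ∃ l, l.map Prod.fst = w ∧ x * A.pathWeight q l * A.τ (A.pathEnd q l) ≠ 0 := by
  induction w generalizing x q with
  | nil => exact ⟨[], rfl, by simpa [pathWeight, pathEnd, future] using h⟩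
  | cons c w ih =>
    rw [future, Finset.mul_sum] at h
    obtain ⟨r, -, hr⟩ := Finset.exists_ne_zero_of_sum_ne_zero h
    rw [← mul_assoc] at hr
    obtain ⟨l, rfl, hl⟩ := ih hr
    exact ⟨(c, r) :: l, rfl, by simpa only [pathWeight, pathEnd, mul_assoc] using hl⟩

theorem exists_monomialWeight_ne_zero_of_behaviour_ne_zero {w : List α} (h : A.behaviour w ≠ 0) :
    ∃ p l, l.map Prod.fst = w ∧ A.monomialWeight p l ≠ 0 := by
  obtain ⟨p, -, hp⟩ := Finset.exists_ne_zero_of_sum_ne_zero h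
  exact ⟨p, exists_path_of_mul_future_ne_zero hp⟩

/-- A weighted automaton is deterministic if at most one state has nonzero initial weight and
each state has at most one outgoing transition of nonzero weight upon each letter. As in
`Bideterministic`, missing transitions are allowed. -/
def Deterministic (A : WeightedAutomaton S α) : Prop :=
  (∀ p q, A.ι p ≠ 0 → A.ι q ≠ 0 → p = q) ∧
  (∀ p c q q', A.σ p c q ≠ 0 → A.σ p c q' ≠ 0 → q = q')

theorem Bideterministic.deterministic (hA : A.Bideterministic) : A.Deterministic :=
  ⟨hA.1, hA.2.2.1⟩

theorem Deterministic.future_map_fst (hA : A.Deterministic) {p : A.Q} {l : List (α × A.Q)}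
    (hl : A.IsPath p l) :
    A.future (l.map Prod.fst) p = A.pathWeight p l * A.τ (A.pathEnd p l) := by
  induction l generalizing p with
  | nil => simp [future, pathWeight, pathEnd]
  | cons e l ih =>
    obtain ⟨c, q⟩ := e
    obtain ⟨hq, hl⟩ := hl
    rw [List.map_cons, future, Finset.sum_eq_single q, ih hl, pathWeight, pathEnd, mul_assoc]
    · intro r _ hrq
      have hr : A.σ p c r = 0 := by_contra fun hr => hrq (hA.2 p c r q hr hq)
      rw [hr, zero_mul]
    · simp

theorem Deterministic.behaviour_map_fst (hA : A.Deterministic) {p : A.Q} {l : List (α × A.Q)}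
    (hp : A.ι p ≠ 0) (hl : A.IsPath p l) :
    A.behaviour (l.map Prod.fst) = A.monomialWeight p l := by
  rw [behaviour, Finset.sum_eq_single p, hA.future_map_fst hl, monomialWeight, mul_assoc]
  · intro r _ hrp
    have hr : A.ι r = 0 := by_contra fun hr => hrp (hA.1 r p hr hp)
    rw [hr, zero_mul]
  · simp

theorem Deterministic.behaviour_map_fst_ne_zero (hA : A.Deterministic) {p : A.Q}
    {l : List (α × A.Q)} (h : A.monomialWeight p l ≠ 0) : A.behaviour (l.map Prod.fst) ≠ 0 := by
  rwa [hA.behaviour_map_fst (ι_ne_zero_of_monomialWeight_ne_zero h)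
    (isPath_of_monomialWeight_ne_zero h)]

end Semiring

section CommSemiring

variable {S : Type} [CommSemiring S] {α : Type} {A : WeightedAutomaton S α}

theorem monomialWeight_append_loop_append {p : A.Q} {u v w : List (α × A.Q)}
    (hv : A.pathEnd p (u ++ v) = A.pathEnd p u) :
    A.monomialWeight p (u ++ v ++ w) =
      A.monomialWeight p (u ++ w) * A.pathWeight (A.pathEnd p u) v := by
  simp only [monomialWeight, pathWeight_append, pathEnd_append p (u ++ v), pathEnd_append p u w, hv]
  ring

theorem Deterministic.nodup_states (hA : A.Deterministic) {p : A.Q} {l : List (α × A.Q)}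
    (hl : A.monomialWeight p l ≠ 0)
    (hmin : ∀ v, v.Sublist (l.map Prod.fst) → A.behaviour v ≠ 0 → v = l.map Prod.fst) :
    (p :: l.map Prod.snd).Nodup := by
  refine List.pairwise_iff_getElem.2 fun i j hi hj hij hloop => ?_
  simp only [getElem_cons_map_snd_eq_pathEnd_take] at hloop
  have hj' : j ≤ l.length := by simpa [Nat.lt_succ_iff] using hj
  obtain ⟨v, hv⟩ : l.take i <+: l.take j := List.take_prefix_take_left hij.le
  have hcut : A.monomialWeight p (l.take i ++ l.drop j) ≠ 0 := by
    rw [← List.take_append_drop j l, ← hv,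
      monomialWeight_append_loop_append (by rw [hv, hloop])] at hl
    exact left_ne_zero_of_mul hl
  have hsub : (l.take i ++ l.drop j).Sublist l := by
    conv_rhs => rw [← List.take_append_drop j l]
    exact (List.take_prefix_take_left hij.le).sublist.append (List.Sublist.refl _)
  have hlen := congrArg List.length
    (hmin _ (hsub.map Prod.fst) (hA.behaviour_map_fst_ne_zero hcut))
  simp only [List.length_map, List.length_append, List.length_take, List.length_drop] at hlen
  omega

theorem Deterministic.exists_nodup_run (hA : A.Deterministic) {w : List α}
    (hw : A.behaviour w ≠ 0) (hmin : ∀ v, v.Sublist w → A.behaviour v ≠ 0 → v = w) :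
    ∃ p l, l.map Prod.fst = w ∧ A.monomialWeight p l ≠ 0 ∧ (p :: l.map Prod.snd).Nodup := by
  obtain ⟨p, l, rfl, hl⟩ := exists_monomialWeight_ne_zero_of_behaviour_ne_zero hw
  exact ⟨p, l, rfl, hl, hA.nodup_states hl hmin⟩

theorem Bideterministic.five_le_states_of_support_eq (hA : A.Bideterministic) {a b : α}
    (hab : a ≠ b) (hsupp : Function.support A.behaviour = {[a, a], [b, a, b]}) : 5 ≤ A.states := by
  have hne (w : List α) : A.behaviour w ≠ 0 ↔ w = [a, a] ∨ w = [b, a, b] := by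
    rw [← Function.mem_support, hsupp]; rfl
  obtain ⟨p, l, hlw, hl, hl_nodup⟩ := hA.deterministic.exists_nodup_run (w := [a, a])
    ((hne _).2 (.inl rfl)) fun v hv hv0 => by
      rcases (hne v).1 hv0 with rfl | rfl
      · rfl
      · simpa using hv.length_le
  obtain ⟨p', m, hmw, hm, hm_nodup⟩ := hA.deterministic.exists_nodup_run (w := [b, a, b])
    ((hne _).2 (.inr rfl)) fun v hv hv0 => by
      rcases (hne v).1 hv0 with rfl | rfl
      · simp [List.sublist_cons_iff, hab] at hv
      · rfl
  obtain ⟨x, z, rfl⟩ : ∃ x z, l = [(a, x), (a, z)] := by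
    simpa [List.map_eq_cons_iff] using hlw
  obtain ⟨q₁, q₂, q₃, rfl⟩ : ∃ q₁ q₂ q₃, m = [(b, q₁), (a, q₂), (b, q₃)] := by
    simpa [List.map_eq_cons_iff] using hmw
  obtain rfl : p = p' := hA.1 _ _ (ι_ne_zero_of_monomialWeight_ne_zero hl)
    (ι_ne_zero_of_monomialWeight_ne_zero hm)
  obtain rfl : z = q₃ := hA.2.1 _ _ (τ_ne_zero_of_monomialWeight_ne_zero hl)
    (τ_ne_zero_of_monomialWeight_ne_zero hm)
  obtain ⟨hpx, hxz, -⟩ := isPath_of_monomialWeight_ne_zero hl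
  obtain ⟨-, hq₁q₂, -, -⟩ := isPath_of_monomialWeight_ne_zero hm
  have hxq₁ : x ≠ q₁ := by
    rintro rfl
    have : q₂ = z := hA.2.2.1 _ _ _ _ hq₁q₂ hxz
    simp [this] at hm_nodup
  have hxq₂ : x ≠ q₂ := by
    rintro rfl
    have : p = q₁ := hA.2.2.2 _ _ _ _ hpx hq₁q₂
    simp [this] at hm_nodup
  have hnodup : [x, p, q₁, q₂, z].Nodup := by
    simp_all [eq_comm]
  exact hnodup.length_le_card

end CommSemiring

section Matrix

variable {S : Type} [Semiring S] {α Q : Type} [Fintype Q]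

/-- The automaton with state set `Q` whose transition weights are the entries of a matrix over
`α → S`: the `(p, q)` entry maps each letter `c` to the weight of the transition from `p` to `q`
upon `c`. -/
def ofMatrix (M : Matrix Q Q (α → S)) (ι τ : Q → S) : WeightedAutomaton S α where
  Q := Q
  σ p c q := M p q c
  ι := ι
  τ := τ

theorem ofMatrix_future {M : Matrix Q Q (α → S)} {ι τ : Q → S} {F : Q → List α → S}
    (hnil : ∀ q, F q [] = τ q) (hcons : ∀ q c w, F q (c :: w) = ∑ p, M q p c * F p w)
    (w : List α) (q : Q) : (ofMatrix M ι τ).future w q = F q w := by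
  induction w generalizing q with
  | nil => exact (hnil q).symm
  | cons c w ih =>
    rw [hcons]
    exact Finset.sum_congr rfl fun p _ => congrArg (M q p c * ·) (ih p)

theorem ofMatrix_behaviour {M : Matrix Q Q (α → S)} {ι τ : Q → S} {F : Q → List α → S}
    (hnil : ∀ q, F q [] = τ q) (hcons : ∀ q c w, F q (c :: w) = ∑ p, M q p c * F p w)
    (w : List α) : (ofMatrix M ι τ).behaviour w = ∑ q, ι q * F q w :=
  Finset.sum_congr rfl fun q _ => congrArg (ι q * ·) (ofMatrix_future hnil hcons w q)

end Matrix

section Construction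

variable {S : Type} [Semiring S] {α : Type} [DecidableEq α]

theorem single_mul_single_cons (c d : α) (u w : List α) (x y : S) :
    (Pi.single c x : α → S) d * (Pi.single u y : List α → S) w =
      (Pi.single (c :: u) (x * y) : List α → S) (d :: w) := by
  by_cases hd : d = c <;> by_cases hw : w = u <;> simp [hd, hw]

/-- The five-state automaton with the two disjoint branches `0 -a:s→ 1 -a:t→ 4` and
`0 -b:s'→ 2 -a:1→ 3 -b:t'→ 4`, with initial state `0` and terminal state `4`. -/
def splitAutomaton (a b : α) (s t s' t' : S) : WeightedAutomaton S α :=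
  ofMatrix
    !![0, Pi.single a s, Pi.single b s', 0, 0;
       0, 0, 0, 0, Pi.single a t;
       0, 0, 0, Pi.single a 1, 0;
       0, 0, 0, 0, Pi.single b t';
       0, 0, 0, 0, 0]
    ![1, 0, 0, 0, 0] ![0, 0, 0, 0, 1]

/-- The four-state automaton with the branches `0 -a:s→ 2 -a:t→ 3` and
`0 -b:1→ 1 -a:s'→ 2 -b:t'→ 3` sharing the state `2`, with initial state `0` and terminal
state `3`. -/
def mergedAutomaton (a b : α) (s t s' t' : S) : WeightedAutomaton S α :=
  ofMatrix
    !![0, Pi.single b 1, Pi.single a s, 0;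
       0, 0, Pi.single a s', 0;
       0, 0, 0, Pi.single a t + Pi.single b t';
       0, 0, 0, 0]
    ![1, 0, 0, 0] ![0, 0, 0, 1]

theorem splitAutomaton_behaviour (a b : α) (s t s' t' : S) :
    (splitAutomaton a b s t s' t').behaviour =
      Pi.single [a, a] (s * t) + Pi.single [b, a, b] (s' * t') := by
  let F : Fin 5 → List α → S :=
    ![Pi.single [a, a] (s * t) + Pi.single [b, a, b] (s' * t'), Pi.single [a] t,
      Pi.single [a, b] t', Pi.single [b] t', Pi.single [] 1]
  funext w
  refine (ofMatrix_behaviour (F := F) (fun q => ?_) (fun q c w => ?_) w).trans ?_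
  · fin_cases q <;> simp [F]
  · fin_cases q <;> simp [F, Fin.sum_univ_succ, single_mul_single_cons]
  · simp [F, Fin.sum_univ_succ]

theorem mergedAutomaton_behaviour (a b : α) {s t s' t' : S} (hst_cross : s * t' = 0)
    (hts_cross : s' * t = 0) :
    (mergedAutomaton a b s t s' t').behaviour =
      Pi.single [a, a] (s * t) + Pi.single [b, a, b] (s' * t') := by
  let F : Fin 4 → List α → S :=
    ![Pi.single [a, a] (s * t) + Pi.single [b, a, b] (s' * t'), Pi.single [a, b] (s' * t'),
      Pi.single [a] t + Pi.single [b] t', Pi.single [] 1]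
  funext w
  refine (ofMatrix_behaviour (F := F) (fun q => ?_) (fun q c w => ?_) w).trans ?_
  · fin_cases q <;> simp [F]
  · fin_cases q <;>
      simp [F, Fin.sum_univ_succ, add_mul, mul_add, single_mul_single_cons, hst_cross, hts_cross,
        add_comm]
  · simp [F, Fin.sum_univ_succ]

theorem splitAutomaton_trim {a b : α} {s t s' t' : S} (hs : s ≠ 0) (ht : t ≠ 0) (hs' : s' ≠ 0)
    (ht' : t' ≠ 0) : (splitAutomaton a b s t s' t').Trim := by
  have : Nontrivial S := ⟨s, 0, hs⟩
  set A := splitAutomaton a b s t s' t'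
  have edge₀₁ : A.σ (0 : Fin 5) a (1 : Fin 5) ≠ 0 := by simpa [A, splitAutomaton, ofMatrix]
  have edge₁₄ : A.σ (1 : Fin 5) a (4 : Fin 5) ≠ 0 := by simpa [A, splitAutomaton, ofMatrix]
  have edge₀₂ : A.σ (0 : Fin 5) b (2 : Fin 5) ≠ 0 := by simpa [A, splitAutomaton, ofMatrix]
  have edge₂₃ : A.σ (2 : Fin 5) a (3 : Fin 5) ≠ 0 := by simp [A, splitAutomaton, ofMatrix]
  have edge₃₄ : A.σ (3 : Fin 5) b (4 : Fin 5) ≠ 0 := by simpa [A, splitAutomaton, ofMatrix]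
  have acc₀ : A.Accessible (0 : Fin 5) :=
    accessible_of_ι_ne_zero (by simp [A, splitAutomaton, ofMatrix])
  have coacc₄ : A.Coaccessible (4 : Fin 5) :=
    coaccessible_of_τ_ne_zero (by simp [A, splitAutomaton, ofMatrix])
  have acc₁ := acc₀.step edge₀₁
  have acc₂ := acc₀.step edge₀₂
  have coacc₁ := coacc₄.step edge₁₄
  have coacc₃ := coacc₄.step edge₃₄
  have coacc₂ := coacc₃.step edge₂₃
  intro (q : Fin 5)
  fin_cases q
  exacts [⟨acc₀, coacc₁.step edge₀₁⟩, ⟨acc₁, coacc₁⟩, ⟨acc₂, coacc₂⟩, ⟨acc₂.step edge₂₃, coacc₃⟩,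
    ⟨acc₁.step edge₁₄, coacc₄⟩]

theorem mem_of_splitAutomaton_σ_ne_zero {a b : α} {s t s' t' : S} {p q : Fin 5} {c : α}
    (h : (splitAutomaton a b s t s' t').σ p c q ≠ 0) :
    (p, c, q) ∈ [(0, a, 1), (0, b, 2), (1, a, 4), (2, a, 3), (3, b, 4)] := by
  fin_cases p <;> fin_cases q <;> simp_all [splitAutomaton, ofMatrix, Pi.single_apply]

theorem splitAutomaton_bideterministic {a b : α} (hab : a ≠ b) (s t s' t' : S) :
    (splitAutomaton a b s t s' t').Bideterministic := by
  have eq_zero_of_ι (p : Fin 5) (hp : (splitAutomaton a b s t s' t').ι p ≠ 0) : p = 0 := by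
    fin_cases p <;> simp_all [splitAutomaton, ofMatrix]
  have eq_four_of_τ (p : Fin 5) (hp : (splitAutomaton a b s t s' t').τ p ≠ 0) : p = 4 := by
    fin_cases p <;> simp_all [splitAutomaton, ofMatrix]
  refine ⟨fun p q hp hq => (eq_zero_of_ι p hp).trans (eq_zero_of_ι q hq).symm,
    fun p q hp hq => (eq_four_of_τ p hp).trans (eq_four_of_τ q hq).symm,
    fun (p : Fin 5) c (q : Fin 5) (q' : Fin 5) hq hq' => ?_,
    fun (p : Fin 5) (p' : Fin 5) c (q : Fin 5) hp hp' => ?_⟩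
  · have hmem := mem_of_splitAutomaton_σ_ne_zero hq
    have hmem' := mem_of_splitAutomaton_σ_ne_zero hq'
    simp only [List.mem_cons, Prod.mk.injEq, List.not_mem_nil] at hmem hmem'
    grind
  · have hmem := mem_of_splitAutomaton_σ_ne_zero hp
    have hmem' := mem_of_splitAutomaton_σ_ne_zero hp'
    simp only [List.mem_cons, Prod.mk.injEq, List.not_mem_nil] at hmem hmem'
    grind

theorem support_splitAutomaton_behaviour (a b : α) {s t s' t' : S} (hst : s * t ≠ 0)
    (hst' : s' * t' ≠ 0) :
    Function.support (splitAutomaton a b s t s' t').behaviour = {[a, a], [b, a, b]} := by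
  ext w
  rw [Function.mem_support, splitAutomaton_behaviour]
  by_cases hw : w = [a, a] <;> by_cases hw' : w = [b, a, b] <;> simp_all

end Construction

end WeightedAutomaton

open WeightedAutomaton in
theorem exists_trim_bideterministic_no_minimal_bideterministic_general
    {S : Type} [CommSemiring S] (α : Type) [Nontrivial α] (s t s' t' : S)
    (h1 : s * t ≠ 0) (h2 : s' * t' ≠ 0) (h3 : s * t' = 0) (h4 : s' * t = 0) :
    ∃ A : WeightedAutomaton S α, A.Trim ∧ A.Bideterministic ∧
      ∀ B : WeightedAutomaton S α,
        B.behaviour = A.behaviour → B.Minimal → ¬ B.Bideterministic := by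
  classical
  obtain ⟨a, b, hab⟩ := exists_pair_ne α
  refine ⟨splitAutomaton a b s t s' t',
    splitAutomaton_trim (left_ne_zero_of_mul h1) (right_ne_zero_of_mul h1)
      (left_ne_zero_of_mul h2) (right_ne_zero_of_mul h2),
    splitAutomaton_bideterministic hab s t s' t', fun B hB hmin hbidet => ?_⟩
  have five_le : 5 ≤ B.states :=
    hbidet.five_le_states_of_support_eq hab (by rw [hB, support_splitAutomaton_behaviour a b h1 h2])
  have le_four : B.states ≤ 4 :=
    hmin (mergedAutomaton a b s t s' t')
      (by rw [hB, splitAutomaton_behaviour, mergedAutomaton_behaviour a b h3 h4])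
  omega

/-- Over a commutative semiring with elements `s, t, s', t'` such that
`s*t ≠ 0 ≠ s'*t'` and `s*t' = 0 = s'*t`, there is a trim bideterministic
weighted automaton over the two-letter alphabet `Bool` none of whose
equivalent minimal automata is bideterministic. -/
theorem exists_trim_bideterministic_no_minimal_bideterministic
    {S : Type} [CommSemiring S] (s t s' t' : S)
    (h1 : s * t ≠ 0) (h2 : s' * t' ≠ 0) (h3 : s * t' = 0) (h4 : s' * t = 0) :
    ∃ A : WeightedAutomaton S Bool, A.Trim ∧ A.Bideterministic ∧
      ∀ B : WeightedAutomaton S Bool,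
        B.behaviour = A.behaviour → B.Minimal → ¬ B.Bideterministic :=
  exists_trim_bideterministic_no_minimal_bideterministic_general Bool s t s' t' h1 h2 h3 h4
end
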